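/- Let n and k be positive integers with 2k ≤ n. Then the number of words w : Fin n → Fin 5 whose inversion number inv(w) = |{(i,j) : i < j and w(j) < w(i)}| is at most k² is at most 16·k⁴·((e·n)/k)^{8k}, where e = exp(1) and the cardinality is cast to a real number. -/

import Mathlib

/-- The inversion number of a word `w : Fin n → A` over a linearly ordered
alphabet `A`: the number of pairs `(i, j)` with `i < j` and `w j < w i`. -/
def invNum {n : ℕ} {A : Type*} [LinearOrder A] (w : Fin n → A) : ℕ :=
  (Finset.univ.filter (fun p : Fin n × Fin n => p.1 < p.2 ∧ w p.2 < w p.1)).card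

open Finset in
lemma invNum_eq_sum {n : ℕ} (w : Fin n → Fin 2) :
    invNum w = ∑ i, ∑ j, if i < j ∧ w j < w i then 1 else 0 := by
  unfold invNum
  rw [Finset.card_filter, Fintype.sum_prod_type]

/-- number of ones -/
def onesNum {n : ℕ} (w : Fin n → Fin 2) : ℕ := ∑ i, (w i : ℕ)

lemma invNum_snoc_one {n : ℕ} (w : Fin n → Fin 2) :
    invNum (Fin.snoc w 1 : Fin (n+1) → Fin 2) = invNum w := by
  rw [invNum_eq_sum, invNum_eq_sum]
  simp only [Fin.sum_univ_castSucc, Fin.snoc_castSucc, Fin.snoc_last, Fin.castSucc_lt_castSucc_iff]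
  have h1 : ∀ x : Fin 2, ¬ (1 < x) := by decide
  have h2 : ∀ x : Fin n, ¬ (Fin.last n < x.castSucc) := fun x => not_lt.mpr (Fin.le_last _)
  simp [h1, h2]

lemma invNum_snoc_zero {n : ℕ} (w : Fin n → Fin 2) :
    invNum (Fin.snoc w 0 : Fin (n+1) → Fin 2) = invNum w + onesNum w := by
  rw [invNum_eq_sum, invNum_eq_sum]
  simp only [Fin.sum_univ_castSucc, Fin.snoc_castSucc, Fin.snoc_last, Fin.castSucc_lt_castSucc_iff]
  have h1 : ∀ x : Fin 2, (if 0 < x then 1 else 0) = (x : ℕ) := by decide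
  have h2 : ∀ x : Fin n, ¬ (Fin.last n < x.castSucc) := fun x => not_lt.mpr (Fin.le_last _)
  simp only [h2, Fin.castSucc_lt_last, true_and, h1, Finset.sum_add_distrib, onesNum]
  simp

lemma onesNum_snoc {n : ℕ} (w : Fin n → Fin 2) (b : Fin 2) :
    onesNum (Fin.snoc w b : Fin (n+1) → Fin 2) = onesNum w + b := by
  simp [onesNum, Fin.sum_univ_castSucc]

/-- weighted count of binary words with `a` ones -/
noncomputable def wS (x : ℝ) (n a : ℕ) : ℝ :=
  ∑ w : Fin n → Fin 2, if onesNum w = a then x ^ invNum w else 0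

/-- partition product -/
noncomputable def wP (x : ℝ) (a : ℕ) : ℝ := ∏ i ∈ Finset.range a, (1 - x ^ (i+1))⁻¹

lemma wS_succ (x : ℝ) (n a : ℕ) : wS x (n+1) a = x ^ a * wS x n a +
    ∑ w : Fin n → Fin 2, if onesNum w + 1 = a then x ^ invNum w else 0 := by
  unfold wS
  rw [← (Fin.snocEquiv (fun _ : Fin (n+1) => Fin 2)).sum_comp, Fintype.sum_prod_type,
    Fin.sum_univ_two]
  simp only [Fin.snocEquiv, Equiv.coe_fn_mk]
  congr 1
  · rw [Finset.mul_sum]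
    refine Finset.sum_congr rfl fun w _ => ?_
    have e1 := onesNum_snoc w 0
    have e2 := invNum_snoc_zero w
    erw [e1, e2]
    by_cases h : onesNum w = a
    · simp [h, pow_add, mul_comm]
    · simp [h]
  · refine Finset.sum_congr rfl fun w _ => ?_
    have e1 := onesNum_snoc w 1
    have e2 := invNum_snoc_one w
    erw [e1, e2]
    rfl

lemma wS_le (x : ℝ) (hx0 : 0 < x) (hx1 : x < 1) (n a : ℕ) : wS x n a ≤ wP x a := by
  have hf : ∀ i : ℕ, 0 < 1 - x ^ (i+1) := fun i => by
    have := pow_lt_one₀ hx0.le hx1 (Nat.succ_ne_zero i)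
    simpa using this
  have hP : ∀ a, 0 < wP x a := fun a => Finset.prod_pos fun i _ => inv_pos.mpr (hf i)
  induction n generalizing a with
  | zero =>
    unfold wS
    simp only [Finset.univ_unique, Finset.sum_singleton, onesNum, invNum]
    rcases a with _ | a
    · simp [wP]
    · simpa using (hP (a+1)).le
  | succ n ih =>
    rw [wS_succ]
    rcases a with _ | a
    · simpa using ih 0
    · have h1 := ih (a+1)
      have h2 := ih a
      simp only [add_left_inj]
      change _ + wS x n a ≤ _
      have h3 : wP x (a+1) * (1 - x^(a+1)) = wP x a := by
        unfold wP
        rw [Finset.prod_range_succ, mul_assoc, inv_mul_cancel₀ (hf a).ne', mul_one]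
      have h4 := mul_le_mul_of_nonneg_left h1 (pow_pos hx0 (a+1)).le
      nlinarith

lemma wP_le (t : ℝ) (ht : 0 < t) (a : ℕ) :
    wP (Real.exp (-t)) a ≤ Real.exp (Real.pi ^ 2 / 6 / t) := by
  set x := Real.exp (-t) with hx
  have hx0 : 0 < x := Real.exp_pos _
  have hx1 : x < 1 := Real.exp_lt_one_iff.mpr (by linarith)
  have hy : ∀ i : ℕ, x ^ (i+1) < 1 := fun i => pow_lt_one₀ hx0.le hx1 (Nat.succ_ne_zero i)
  have e : wP x a = Real.exp (∑ i ∈ Finset.range a, -Real.log (1 - x^(i+1))) := by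
    rw [Real.exp_sum]
    refine Finset.prod_congr rfl fun i _ => ?_
    rw [Real.exp_neg, Real.exp_log (by linarith [hy i])]
  rw [e, Real.exp_le_exp]
  have hs : HasSum (fun j : ℕ => ∑ i ∈ Finset.range a, (x^(i+1))^(j+1)/((j:ℝ)+1))
      (∑ i ∈ Finset.range a, -Real.log (1 - x^(i+1))) := by
    refine hasSum_sum fun i _ => ?_
    apply Real.hasSum_pow_div_log_of_abs_lt_one
    rw [abs_of_pos (pow_pos hx0 _)]
    exact hy i
  have hz : HasSum (fun j : ℕ => 1 / ((j:ℝ)+1)^2 / t) (Real.pi ^ 2 / 6 / t) := by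
    apply HasSum.div_const
    have := (hasSum_nat_add_iff' 1).mpr hasSum_zeta_two
    simpa using this
  refine hasSum_le (fun j => ?_) hs hz
  rw [← Finset.sum_div]
  have hj : (0:ℝ) < (j:ℝ)+1 := by positivity
  set y := x^(j+1) with hyd
  have hy0 : 0 < y := pow_pos hx0 _
  have hy1 : y < 1 := hy j
  have e1 : ∑ i ∈ Finset.range a, (x^(i+1))^(j+1) = y * ∑ i ∈ Finset.range a, y^i := by
    rw [Finset.mul_sum]
    refine Finset.sum_congr rfl fun i _ => ?_
    rw [hyd]; ring
  have hg : (∑ i ∈ Finset.range a, y^i) * (1 - y) ≤ 1 := by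
    have := geom_sum_mul y a
    have := pow_pos hy0 a
    linarith
  have hexp : y * (1 + (j+1) * t) ≤ 1 := by
    have h1 : y * Real.exp ((j+1)*t) = 1 := by
      rw [hyd, hx, ← Real.exp_nat_mul, ← Real.exp_add]
      push_cast
      ring_nf
      simp
    have h2 := Real.add_one_le_exp (((j:ℝ)+1)*t)
    nlinarith
  rw [e1]
  set G := ∑ i ∈ Finset.range a, y^i with hG
  have hG0 : 0 ≤ G := Finset.sum_nonneg fun i _ => (pow_pos hy0 i).le
  have key : y * G * ((j+1) * t) ≤ 1 := by nlinarith
  have : 1 / ((j:ℝ)+1)^2 / t = (1 / (((j:ℝ)+1) * t)) / (j+1) := by field_simp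
  rw [this]
  gcongr
  rw [le_div_iff₀ (by positivity)]
  exact key

lemma onesNum_le {n : ℕ} (w : Fin n → Fin 2) : onesNum w ≤ n := by
  unfold onesNum
  calc ∑ i, (w i : ℕ) ≤ ∑ _i : Fin n, 1 := Finset.sum_le_sum fun i _ => by omega
    _ = n := by simp

lemma binary_count (n k : ℕ) (hk : 0 < k) (hkn : 2 * k ≤ n) :
    ((Finset.univ.filter (fun w : Fin n → Fin 2 => invNum w ≤ k ^ 2)).card : ℝ) ≤
      2 * k * ((Real.exp 1 * n) / k) ^ (2 * k) := by
  have hk' : (0:ℝ) < k := by exact_mod_cast hk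
  have hk1 : (1:ℝ) ≤ k := by exact_mod_cast hk
  have hkn' : 2 * (k:ℝ) ≤ n := by exact_mod_cast hkn
  set x := Real.exp (-(1/(k:ℝ))) with hx
  have hx0 : 0 < x := Real.exp_pos _
  have hx1 : x < 1 := Real.exp_lt_one_iff.mpr (by simpa using hk)
  set N := ((Finset.univ.filter (fun w : Fin n → Fin 2 => invNum w ≤ k ^ 2)).card : ℝ) with hN
  have h1 : N * x ^ (k^2) ≤ ∑ w : Fin n → Fin 2, x ^ invNum w := by
    rw [hN, ← nsmul_eq_mul]
    refine (Finset.card_nsmul_le_sum _ (fun w => x ^ invNum w) _ ?_).trans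
      (Finset.sum_le_sum_of_subset_of_nonneg (Finset.filter_subset _ _)
        fun _ _ _ => (pow_pos hx0 _).le)
    intro w hw
    exact pow_le_pow_of_le_one hx0.le hx1.le (Finset.mem_filter.mp hw).2
  have h2 : ∑ w : Fin n → Fin 2, x ^ invNum w = ∑ a ∈ Finset.range (n+1), wS x n a := by
    unfold wS
    rw [Finset.sum_comm]
    refine Finset.sum_congr rfl fun w _ => ?_
    rw [Finset.sum_ite_eq]
    simp [Nat.lt_succ_iff.mpr (onesNum_le w)]
  have h3 : ∑ a ∈ Finset.range (n+1), wS x n a ≤ (n+1) * Real.exp (Real.pi^2/6*k) := by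
    calc _ ≤ ∑ a ∈ Finset.range (n+1), Real.exp (Real.pi^2/6*k) := by
          refine Finset.sum_le_sum fun a _ => (wS_le x hx0 hx1 n a).trans ?_
          have := wP_le (1/(k:ℝ)) (by positivity) a
          rw [← hx] at this
          simpa using this
      _ = _ := by simp
  have h4 : x ^ (k^2) = Real.exp (-(k:ℝ)) := by
    rw [hx, ← Real.exp_nat_mul]
    congr 1
    push_cast
    field_simp
  have h5 : N ≤ (n+1) * Real.exp (Real.pi^2/6*k + k) := by
    have : N = N * x^(k^2) * Real.exp k := by
      rw [h4, mul_assoc, ← Real.exp_add]; simp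
    rw [this, Real.exp_add, ← mul_assoc]
    exact mul_le_mul_of_nonneg_right (h1.trans (h2.le.trans h3)) (Real.exp_pos _).le
  have h6 : Real.exp (Real.pi^2/6*k + k) ≤ (Real.exp 1)^(2*k) * 2^k := by
    have : (2:ℝ)^k = Real.exp (k * Real.log 2) := by
      rw [Real.exp_nat_mul, Real.exp_log (by norm_num)]
    rw [this, ← Real.exp_nat_mul, ← Real.exp_add, Real.exp_le_exp]
    have hp := Real.pi_lt_d2
    have hp0 := Real.pi_pos
    have hl := Real.log_two_gt_d9
    have : Real.pi^2/6 ≤ 1 + Real.log 2 := by nlinarith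
    push_cast
    nlinarith
  set r := (n:ℝ)/k with hr
  have hr2 : 2 ≤ r := by rw [hr, le_div_iff₀ hk']; exact hkn'
  have hnr : (n:ℝ) = r * k := by rw [hr]; field_simp
  have h7 : ((n:ℝ)+1) * 2^k ≤ 2 * k * r^(2*k) := by
    obtain ⟨m, rfl⟩ : ∃ m, k = m + 1 := ⟨k-1, by omega⟩
    have a1 : (2:ℝ)^(m+1) ≤ r^(m+1) := pow_le_pow_left₀ (by norm_num) hr2 _
    have a2 : (2:ℝ)^m ≤ r^m := pow_le_pow_left₀ (by norm_num) hr2 _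
    have a3 : (1:ℝ) ≤ 2^m := one_le_pow₀ (by norm_num)
    have a4 : r * 2^(m+1) ≤ r^(2*(m+1)) := by
      have : r^(2*(m+1)) = r * (r^(m+1) * r^m) := by ring
      rw [this]
      have : (2:ℝ)^(m+1) * 1 ≤ r^(m+1) * r^m := by gcongr; linarith
      gcongr; linarith
    have a5 : (n:ℝ) + 1 ≤ 2 * ((m+1:ℕ):ℝ) * r := by
      rw [hnr]; nlinarith
    calc ((n:ℝ)+1) * 2^(m+1) ≤ (2 * ((m+1:ℕ):ℝ) * r) * 2^(m+1) := by gcongr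
      _ = 2 * ((m+1:ℕ):ℝ) * (r * 2^(m+1)) := by ring
      _ ≤ _ := by gcongr
  calc N ≤ (n+1) * ((Real.exp 1)^(2*k) * 2^k) := h5.trans (by gcongr)
    _ = (Real.exp 1)^(2*k) * ((n+1) * 2^k) := by ring
    _ ≤ (Real.exp 1)^(2*k) * (2 * k * r^(2*k)) := by gcongr
    _ = _ := by rw [mul_div_assoc, mul_pow]; ring

/-- threshold word -/
def thr {n : ℕ} (w : Fin n → Fin 5) (c : Fin 4) : Fin n → Fin 2 :=
  fun i => if c.castSucc < w i then 1 else 0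

lemma invNum_thr {n : ℕ} (w : Fin n → Fin 5) (c : Fin 4) : invNum (thr w c) ≤ invNum w := by
  unfold invNum
  refine Finset.card_le_card fun p hp => ?_
  have hq := (Finset.mem_filter.mp hp).2
  refine Finset.mem_filter.mpr ⟨Finset.mem_univ _, hq.1, ?_⟩
  have h := hq.2
  unfold thr at h
  split_ifs at h with h1 h2 h2
  · exact absurd h (by decide)
  · exact absurd h (by decide)
  · exact (not_lt.mp h1).trans_lt h2
  · exact absurd h (by decide)

lemma thr_inj {n : ℕ} : Function.Injective (thr : (Fin n → Fin 5) → Fin 4 → Fin n → Fin 2) := by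
  intro w v h
  funext i
  have key : ∀ a b : Fin 5, (∀ c : Fin 4, (if c.castSucc < a then (1 : Fin 2) else 0) =
      if c.castSucc < b then 1 else 0) → a = b := by decide
  exact key _ _ fun c => congrFun (congrFun h c) i

theorem count_low_inversion_words_five_letters_exp_bound (n k : ℕ) (hn : 0 < n) (hk : 0 < k)
    (hkn : 2 * k ≤ n) :
    ((Finset.univ.filter (fun w : Fin n → Fin 5 => invNum w ≤ k ^ 2)).card : ℝ) ≤
      16 * (k : ℝ) ^ 4 * ((Real.exp 1 * n) / k) ^ (8 * k) := by
  have h1 : (Finset.univ.filter (fun w : Fin n → Fin 5 => invNum w ≤ k ^ 2)).card ≤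
      (Finset.univ.filter (fun w : Fin n → Fin 2 => invNum w ≤ k ^ 2)).card ^ 4 := by
    rw [← Fintype.card_piFinset_const]
    refine Finset.card_le_card_of_injOn thr (fun w hw => ?_) thr_inj.injOn
    simp only [Finset.coe_filter, Finset.mem_univ, true_and, Set.mem_ofPred_eq] at hw
    simp only [Finset.mem_coe, Fintype.mem_piFinset, Finset.mem_filter, Finset.mem_univ, true_and]
    exact fun c => (invNum_thr w c).trans hw
  calc _ ≤ (((Finset.univ.filter (fun w : Fin n → Fin 2 => invNum w ≤ k ^ 2)).card : ℝ)) ^ 4 := by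
        exact_mod_cast h1
    _ ≤ (2 * k * ((Real.exp 1 * n) / k) ^ (2 * k)) ^ 4 :=
        pow_le_pow_left₀ (by positivity) (binary_count n k hk hkn) 4
    _ = _ := by
        rw [mul_pow, mul_pow, ← pow_mul, show 2 * k * 4 = 8 * k by ring]
        norm_num
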